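/- Let G be a simple graph on Fin N with at least one edge, K > 0, ω : Fin N → ℝ, and let θ : Fin N → ℝ be an equilibrium of the non-identical Kuramoto system (for every vertex k, ω k + K·∑_j a(j,k)·sin(θ j − θ k) = 0) which is a local minimum of the energy E(φ) = −∑_h ω h · φ h + K·(1/2)·∑_{p,q} a(p,q)·(1 − cos(φ p − φ q)). Then the Jacobian matrix M, defined by M(j,k) = K·a(j,k)·cos(θ j − θ k) for j ≠ k and M(k,k) = −K·∑_j a(j,k)·cos(θ j − θ k), has a strictly negative eigenvalue: there exist a nonzero vector v : Fin N → ℝ and a real number λ < 0 with M.mulVec v = λ • v. -/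

import Mathlib

open Real

open Classical in
/-- Adjacency indicator: `1` if `j` and `k` are adjacent in `G`, `0` otherwise. -/
noncomputable def adjInd {V : Type*} (G : SimpleGraph V) (j k : V) : ℝ :=
  if G.Adj j k then 1 else 0

/-- A completely degenerate equilibrium of the identical Kuramoto system on `G`. -/
def IsCDE {V : Type*} [Fintype V] (G : SimpleGraph V) (θ : V → ℝ) : Prop :=
  (∀ k, ∑ j, adjInd G j k * Real.sin (θ j - θ k) = 0) ∧
  (∀ j k, G.Adj j k → Real.cos (θ j - θ k) = 0)

/-- The energy of the non-identical Kuramoto system (double sum over ordered pairs,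
halved). -/
noncomputable def energyNonId {N : ℕ} (G : SimpleGraph (Fin N)) (K : ℝ) (ω : Fin N → ℝ)
    (φ : Fin N → ℝ) : ℝ :=
  - ∑ h, ω h * φ h + K * ((1 / 2) * ∑ p, ∑ q, adjInd G p q * (1 - Real.cos (φ p - φ q)))

/-!
The Jacobian `J` of the vector field with coupling weights `W` is minus the Hessian of the energy
`E`. Second differences of `E` therefore give `J k k ≤ 0` at a local minimum, so `J` has nonpositive
trace; since it is symmetric, it has a negative eigenvalue unless it vanishes. It cannot vanish: if
the off-diagonal entries of `J` are zero at `θ`, then `E (θ + x) + E (θ - x) = 2 * E θ` for all `x`,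
so `E` is constant near the local minimum `θ`, and every point near `θ` is a local minimum as well.
But along the `l`-th coordinate direction the entry `J k k` is `W l k * sin (θ l - θ k) * sin t`,
and for `k ≠ l` with `W l k ≠ 0` this is positive for some arbitrarily small `t`.
-/

open Finset Filter Topology Matrix

section

open scoped ComplexOrder

theorem exists_neg_eigenvalue_of_trace_nonpos {𝕜 n : Type*} [RCLike 𝕜] [Fintype n]
    {A : Matrix n n 𝕜} (hA : A.IsHermitian) (hA₀ : A ≠ 0) (htr : A.trace ≤ 0) :
    ∃ (v : n → 𝕜) (μ : ℝ), v ≠ 0 ∧ μ < 0 ∧ A *ᵥ v = μ • v := by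
  classical
  have not_posSemidef : ¬A.PosSemidef := fun h =>
    hA₀ (h.trace_eq_zero_iff.1 (htr.antisymm h.trace_nonneg))
  obtain ⟨i, hi⟩ : ∃ i, hA.eigenvalues i < 0 := by
    simpa [hA.posSemidef_iff_eigenvalues_nonneg, Pi.le_def] using not_posSemidef
  refine ⟨hA.eigenvectorBasis i, hA.eigenvalues i, fun h => ?_, hi, hA.mulVec_eigenvectorBasis i⟩
  exact hA.eigenvectorBasis.orthonormal.ne_zero i (PiLp.ext (congrFun h))

end

theorem eventually_isLocalMin_of_add_add_sub_eq {E β : Type*} [AddGroup E] [TopologicalSpace E]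
    [IsTopologicalAddGroup E] [AddCommGroup β] [PartialOrder β] [IsOrderedAddMonoid β]
    {f : E → β} {a : E} (hmin : IsLocalMin f a)
    (hsymm : ∀ x, f (a + x) + f (a - x) = f a + f a) : ∀ᶠ b in 𝓝 a, IsLocalMin f b := by
  have hreflect : Tendsto (fun b => a - (-a + b)) (𝓝 a) (𝓝 a) :=
    Continuous.tendsto' (by fun_prop) _ _ (by simp)
  have hconst : f =ᶠ[𝓝 a] fun _ => f a := by
    filter_upwards [hmin, hreflect.eventually hmin] with b hb hb'
    have hsum := hsymm (-a + b)
    rw [add_neg_cancel_left] at hsum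
    exact ((add_eq_add_iff_eq_and_eq hb hb').1 hsum.symm).1.symm
  filter_upwards [hconst.eventuallyEq_nhds] with b hb
  exact isLocalMin_const.congr hb.symm

theorem exists_mem_Ioo_and_neg_of_eventually {α : Type*} [AddCommGroup α] [LinearOrder α]
    [IsOrderedAddMonoid α] [TopologicalSpace α] [OrderTopology α] [DenselyOrdered α] {p : α → Prop}
    (hp : ∀ᶠ t in 𝓝 0, p t) {ε : α} (hε : 0 < ε) : ∃ t ∈ Set.Ioo 0 ε, p t ∧ p (-t) := by
  have hp_neg : ∀ᶠ t in 𝓝 0, p (-t) := (continuous_neg.tendsto' 0 0 neg_zero).eventually hp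
  have hp_both : ∀ᶠ t in 𝓝[>] 0, p t ∧ p (-t) :=
    (hp.and hp_neg).filter_mono nhdsWithin_le_nhds
  have : (𝓝[>] (0 : α)).NeBot := nhdsGT_neBot_of_exists_gt ⟨ε, hε⟩
  exact (hp_both.and (Ioo_mem_nhdsGT hε)).exists.imp fun _ => And.symm

theorem tendsto_add_single {ι M : Type*} [DecidableEq ι] [AddMonoid M] [TopologicalSpace M]
    [ContinuousAdd M] (a : ι → M) (i : ι) :
    Tendsto (fun t => a + Pi.single i t) (𝓝 0) (𝓝 a) :=
  (continuous_const.add (continuous_single i)).tendsto' _ _ (by simp)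

section

variable {V : Type*}

/-- The coupling strengths of the Kuramoto system with weights `W`, linearized at `θ`. -/
noncomputable def linearizedCoupling (W : Matrix V V ℝ) (θ : V → ℝ) : Matrix V V ℝ :=
  .of fun j k => W j k * cos (θ j - θ k)

theorem isSymm_linearizedCoupling {W : Matrix V V ℝ} (hW : W.IsSymm) (θ : V → ℝ) :
    (linearizedCoupling W θ).IsSymm :=
  .ext fun j k => by simp [linearizedCoupling, hW.apply j k, ← cos_neg (θ k - θ j)]

variable [Fintype V]

/-- The energy of the Kuramoto system with coupling weights `W` and intrinsic frequencies `ω`.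
Weights may have either sign, and the overall coupling constant is absorbed into them. -/
noncomputable def kuramotoEnergy (W : Matrix V V ℝ) (ω φ : V → ℝ) : ℝ :=
  -∑ h, ω h * φ h + 1 / 2 * ∑ p, ∑ q, W p q * (1 - cos (φ p - φ q))

theorem kuramotoEnergy_add_add_kuramotoEnergy_sub (W : Matrix V V ℝ) (ω θ x : V → ℝ) :
    kuramotoEnergy W ω (θ + x) + kuramotoEnergy W ω (θ - x) =
      kuramotoEnergy W ω θ + kuramotoEnergy W ω θ +
        ∑ p, ∑ q, linearizedCoupling W θ p q * (1 - cos (x p - x q)) := by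
  have hlinear : ∑ h, ω h * (θ + x) h + ∑ h, ω h * (θ - x) h = 2 * ∑ h, ω h * θ h := by
    rw [← sum_add_distrib, mul_sum]
    exact sum_congr rfl fun h _ => by simp only [Pi.add_apply, Pi.sub_apply]; ring
  have hpair (p q : V) : W p q * (1 - cos ((θ + x) p - (θ + x) q)) +
      W p q * (1 - cos ((θ - x) p - (θ - x) q)) =
      2 * (W p q * (1 - cos (θ p - θ q))) +
        2 * (linearizedCoupling W θ p q * (1 - cos (x p - x q))) := by
    simp only [Pi.add_apply, Pi.sub_apply, linearizedCoupling, of_apply, add_sub_add_comm,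
      sub_sub_sub_comm, cos_add (θ p - θ q), cos_sub (θ p - θ q)]
    ring
  have hcos := Fintype.sum_congr _ _ fun p => Fintype.sum_congr _ _ (hpair p)
  simp only [sum_add_distrib, ← mul_sum] at hcos
  simp only [kuramotoEnergy]
  linear_combination -hlinear + hcos / 2

variable [DecidableEq V]

/-- The Jacobian at `θ` of the Kuramoto vector field with coupling weights `W`. For symmetric `W`
it is minus the Hessian of `kuramotoEnergy`. The self-couplings `W k k` cancel on the diagonal. -/
noncomputable def kuramotoJacobian (W : Matrix V V ℝ) (θ : V → ℝ) : Matrix V V ℝ :=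
  linearizedCoupling W θ - diagonal fun k => ∑ j, linearizedCoupling W θ j k

theorem kuramotoJacobian_apply_self (W : Matrix V V ℝ) (θ : V → ℝ) (k : V) :
    kuramotoJacobian W θ k k =
      linearizedCoupling W θ k k - ∑ j, linearizedCoupling W θ j k := by
  simp [kuramotoJacobian]

theorem kuramotoJacobian_apply_of_ne (W : Matrix V V ℝ) (θ : V → ℝ) {j k : V} (hjk : j ≠ k) :
    kuramotoJacobian W θ j k = linearizedCoupling W θ j k := by
  simp [kuramotoJacobian, hjk]

variable {W : Matrix V V ℝ} {ω θ : V → ℝ}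

theorem isSymm_kuramotoJacobian (hW : W.IsSymm) (θ : V → ℝ) : (kuramotoJacobian W θ).IsSymm :=
  (isSymm_linearizedCoupling hW θ).sub (isSymm_diagonal _)

theorem kuramotoEnergy_add_single_add_kuramotoEnergy_add_single_neg (hW : W.IsSymm)
    (ω θ : V → ℝ) (k : V) (t : ℝ) :
    kuramotoEnergy W ω (θ + Pi.single k t) + kuramotoEnergy W ω (θ + Pi.single k (-t)) =
      kuramotoEnergy W ω θ + kuramotoEnergy W ω θ -
        2 * (1 - cos t) * kuramotoJacobian W θ k k := by
  set x : V → ℝ := Pi.single k t with hx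
  set C := linearizedCoupling W θ with hC
  have hterm (p q : V) : C p q * (1 - cos (x p - x q)) =
      (1 - cos t) * ((if p = k then C k q else 0) + (if q = k then C p k else 0) -
        2 * if p = k then if q = k then C k k else 0 else 0) := by
    by_cases hp : p = k <;> by_cases hq : q = k <;>
      simp [hx, hp, hq, mul_comm, ← two_mul]
  have hrow : ∑ q, C k q = ∑ q, C q k :=
    Fintype.sum_congr _ _ fun q => (isSymm_linearizedCoupling hW θ).apply q k
  have hsum : ∑ p, ∑ q, C p q * (1 - cos (x p - x q)) =
      (1 - cos t) * (∑ q, C k q + ∑ p, C p k - 2 * C k k) := by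
    simp [hterm, ← mul_sum, sum_add_distrib, sum_sub_distrib, sum_ite_irrel]
  rw [Pi.single_neg, ← sub_eq_add_neg, kuramotoEnergy_add_add_kuramotoEnergy_sub,
    kuramotoJacobian_apply_self, ← hC, hsum, hrow]
  ring

theorem kuramotoJacobian_apply_self_nonpos_of_isLocalMin (hW : W.IsSymm)
    (hmin : IsLocalMin (kuramotoEnergy W ω) θ) (k : V) : kuramotoJacobian W θ k k ≤ 0 := by
  obtain ⟨t, ⟨ht₀, htπ⟩, hle, hle_neg⟩ :=
    exists_mem_Ioo_and_neg_of_eventually ((tendsto_add_single θ k).eventually hmin) pi_pos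
  have hcos : 0 < 1 - cos t := sub_pos.2 <| by
    simpa using cos_lt_cos_of_nonneg_of_le_pi le_rfl htπ.le ht₀
  have hsecond := kuramotoEnergy_add_single_add_kuramotoEnergy_add_single_neg hW ω θ k t
  exact nonpos_of_mul_nonpos_right (b := kuramotoJacobian W θ k k) (by linarith) hcos

theorem kuramotoEnergy_add_add_kuramotoEnergy_sub_of_isDiag
    (hdiag : (kuramotoJacobian W θ).IsDiag) (ω x : V → ℝ) :
    kuramotoEnergy W ω (θ + x) + kuramotoEnergy W ω (θ - x) =
      kuramotoEnergy W ω θ + kuramotoEnergy W ω θ := by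
  rw [kuramotoEnergy_add_add_kuramotoEnergy_sub, add_eq_left]
  refine sum_eq_zero fun p _ => sum_eq_zero fun q _ => ?_
  rcases eq_or_ne p q with rfl | hpq
  · simp
  · rw [← kuramotoJacobian_apply_of_ne W θ hpq, hdiag hpq, zero_mul]

theorem kuramotoJacobian_add_single_apply_self_of_isDiag (hdiag : (kuramotoJacobian W θ).IsDiag)
    {k l : V} (hlk : l ≠ k) (t : ℝ) :
    kuramotoJacobian W (θ + Pi.single l t) k k = W l k * sin (θ l - θ k) * sin t := by
  have hzero {j : V} (hjk : j ≠ k) : W j k * cos (θ j - θ k) = 0 :=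
    (kuramotoJacobian_apply_of_ne W θ hjk).symm.trans (hdiag hjk)
  have hcol : ∑ j ∈ univ.erase k, linearizedCoupling W (θ + Pi.single l t) j k =
      linearizedCoupling W (θ + Pi.single l t) l k :=
    sum_eq_single_of_mem l (by simp [hlk]) fun j hj hjl => by
      simpa [linearizedCoupling, hjl, hlk.symm] using hzero (ne_of_mem_erase hj)
  have hlk_apply : linearizedCoupling W (θ + Pi.single l t) l k =
      W l k * cos (θ l - θ k + t) := by
    simp [linearizedCoupling, hlk.symm, add_sub_right_comm]
  rw [kuramotoJacobian_apply_self, ← add_sum_erase _ _ (mem_univ k), hcol, hlk_apply, cos_add]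
  linear_combination (-cos t) * hzero hlk

theorem not_isDiag_kuramotoJacobian_of_isLocalMin (hW : W.IsSymm) (hWdiag : ¬W.IsDiag)
    (hmin : IsLocalMin (kuramotoEnergy W ω) θ) : ¬(kuramotoJacobian W θ).IsDiag := by
  intro hdiag
  obtain ⟨l, k, hlk, hWlk⟩ : ∃ l k, l ≠ k ∧ W l k ≠ 0 := by
    simpa [IsDiag, Pairwise] using hWdiag
  have hcos : cos (θ l - θ k) = 0 := by
    have hentry : W l k * cos (θ l - θ k) = 0 :=
      (kuramotoJacobian_apply_of_ne W θ hlk).symm.trans (hdiag hlk)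
    exact (mul_eq_zero.1 hentry).resolve_left hWlk
  have hsin : sin (θ l - θ k) ≠ 0 := fun h => by
    simpa [h, hcos] using sin_sq_add_cos_sq (θ l - θ k)
  have hnearby : ∀ᶠ φ in 𝓝 θ, kuramotoJacobian W φ k k ≤ 0 :=
    (eventually_isLocalMin_of_add_add_sub_eq hmin
      (kuramotoEnergy_add_add_kuramotoEnergy_sub_of_isDiag hdiag ω)).mono fun φ hφ =>
        kuramotoJacobian_apply_self_nonpos_of_isLocalMin hW hφ k
  obtain ⟨t, ht, hle, hle_neg⟩ :=
    exists_mem_Ioo_and_neg_of_eventually ((tendsto_add_single θ l).eventually hnearby) pi_pos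
  rw [kuramotoJacobian_add_single_apply_self_of_isDiag hdiag hlk] at hle hle_neg
  rw [sin_neg, mul_neg, Left.neg_nonpos_iff] at hle_neg
  exact mul_ne_zero (mul_ne_zero hWlk hsin) (sin_pos_of_mem_Ioo ht).ne' (hle.antisymm hle_neg)

end

theorem stmt18_general {V : Type*} [Fintype V] [DecidableEq V] {W : Matrix V V ℝ} (hW : W.IsSymm)
    (hWdiag : ¬W.IsDiag) {ω θ : V → ℝ} (hmin : IsLocalMin (kuramotoEnergy W ω) θ) :
    ∃ (v : V → ℝ) (lam : ℝ), v ≠ 0 ∧ lam < 0 ∧ kuramotoJacobian W θ *ᵥ v = lam • v := by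
  refine exists_neg_eigenvalue_of_trace_nonpos ?hermitian ?ne_zero ?trace
  case hermitian => exact isHermitian_iff_isSymm.2 (isSymm_kuramotoJacobian hW θ)
  case ne_zero =>
    intro h
    exact not_isDiag_kuramotoJacobian_of_isLocalMin hW hWdiag hmin (h ▸ isDiag_zero)
  case trace =>
    exact sum_nonpos fun k _ => kuramotoJacobian_apply_self_nonpos_of_isLocalMin hW hmin k

section

variable {V : Type*} (G : SimpleGraph V)

theorem adjInd_comm (j k : V) : adjInd G j k = adjInd G k j := by
  unfold adjInd
  rw [G.adj_comm j k]

theorem adjInd_self (k : V) : adjInd G k k = 0 := by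
  simp [adjInd]

/-- The weights `K * adjInd G j k` of a graph with uniform coupling `K`. -/
noncomputable def graphCoupling (K : ℝ) : Matrix V V ℝ :=
  .of fun j k => K * adjInd G j k

theorem isSymm_graphCoupling (K : ℝ) : (graphCoupling G K).IsSymm :=
  .ext fun j k => congrArg (K * ·) (adjInd_comm G k j)

theorem not_isDiag_graphCoupling (hE : G.edgeSet.Nonempty) {K : ℝ} (hK : K ≠ 0) :
    ¬(graphCoupling G K).IsDiag := by
  obtain ⟨⟨j, k⟩, hjk : G.Adj j k⟩ := hE
  intro hdiag
  simpa [graphCoupling, adjInd, hjk, hK] using hdiag hjk.ne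

theorem kuramotoJacobian_graphCoupling [Fintype V] [DecidableEq V] (K : ℝ) (θ : V → ℝ) :
    kuramotoJacobian (graphCoupling G K) θ = .of fun j k =>
      if j = k then -K * ∑ i, adjInd G i k * cos (θ i - θ k)
      else K * adjInd G j k * cos (θ j - θ k) := by
  ext j k
  rcases eq_or_ne j k with rfl | hjk
  · simp [kuramotoJacobian_apply_self, linearizedCoupling, graphCoupling, adjInd_self, mul_sum,
      mul_assoc]
  · simp [kuramotoJacobian_apply_of_ne _ _ hjk, linearizedCoupling, graphCoupling, hjk]

end

theorem energyNonId_eq_kuramotoEnergy {N : ℕ} (G : SimpleGraph (Fin N)) (K : ℝ)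
    (ω : Fin N → ℝ) : energyNonId G K ω = kuramotoEnergy (graphCoupling G K) ω := by
  ext φ
  simp only [energyNonId, kuramotoEnergy, graphCoupling, of_apply, mul_assoc, ← mul_sum]
  ring

/-- on a graph with at least one edge, an equilibrium of the non-identical
Kuramoto system (coupling `K > 0`) which is a local minimum of the energy has a Jacobian
with a strictly negative eigenvalue. -/
theorem stmt18 {N : ℕ} (G : SimpleGraph (Fin N)) (hE : G.edgeSet.Nonempty)
    (K : ℝ) (hK : 0 < K) (ω θ : Fin N → ℝ)
    (heq : ∀ k : Fin N, ω k + K * ∑ j, adjInd G j k * Real.sin (θ j - θ k) = 0)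
    (hmin : IsLocalMin (energyNonId G K ω) θ) :
    ∃ (v : Fin N → ℝ) (lam : ℝ), v ≠ 0 ∧ lam < 0 ∧
      (Matrix.of (fun j k : Fin N =>
          if j = k then -K * ∑ i, adjInd G i k * Real.cos (θ i - θ k)
          else K * adjInd G j k * Real.cos (θ j - θ k))).mulVec v = lam • v := by
  rw [← kuramotoJacobian_graphCoupling]
  rw [energyNonId_eq_kuramotoEnergy] at hmin
  exact stmt18_general (isSymm_graphCoupling G K) (not_isDiag_graphCoupling G hE hK.ne') hmin
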